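/- Let (X,μ) and (Y,ν) be standard Borel spaces equipped with σ-finite Borel measures, σ an Arveson measure with constant c on Y × X, and T_σ : L²(X,μ) → L²(Y,ν) the unique bounded operator with ⟨T_σ f, g⟩ = ∫_{Y×X} f(x)·conj(g(y)) dσ(y,x). Let (f_i) ⊆ L²(X,μ) and (g_i) ⊆ L²(Y,ν) be sequences with ∑_i ‖f_i‖₂² < ∞ and ∑_i ‖g_i‖₂² < ∞. Then the function (y,x) ↦ ∑_i |f_i(x)|·|g_i(y)| is |σ|-integrable, and ∑_i ∫_Y (T_σ f_i)(y)·g_i(y) dν(y) = ∫_{Y×X} (∑_i f_i(x)·g_i(y)) dσ(y,x), where the series on the left converges absolutely. -/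

import Mathlib

/-!
Let `F i p = f i p.2` and `G i p = g i p.1` on `Y × X`. Each marginal of `τ` is dominated by `c`
times the base measure, so composition with a coordinate projection is well defined on `L²` classes
and multiplies the integral of `‖·‖ ^ 2` by at most `c` (`integral_sq_norm_comp_le`). By the
inequality `2ab ≤ a² + b²`, `∑ i, ∫ ‖F i‖ * ‖G i‖ ∂τ` is therefore bounded by
`c / 2 * ∑ i, (‖f i‖ ^ 2 + ‖g i‖ ^ 2)`, and the sum is finite. Finiteness gives the integrability of
`∑ i, ‖F i‖ * ‖G i‖` (monotone convergence) and allows the sum to be exchanged with the integral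
against `w τ` (dominated convergence). The individual terms are the defining identity of `T` at
`f i` and the complex conjugate of `g i`.
-/

open MeasureTheory

/-- Monotone convergence for real series. Convergence of `∑ i, H i p` is not needed on the
exceptional null set: there the divergent real sum and `ENNReal.toReal ∞` are both `0`. -/
theorem integrable_tsum_of_nonneg {Z : Type*} [MeasurableSpace Z] {τ : Measure Z}
    {H : ℕ → Z → ℝ} (hH : ∀ i, Integrable (H i) τ) (h0 : ∀ i p, 0 ≤ H i p)
    (hs : Summable fun i => ∫ p, H i p ∂τ) : Integrable (fun p => ∑' i, H i p) τ := by
  have hfin : ∫⁻ p, ∑' i, ENNReal.ofReal (H i p) ∂τ ≠ ⊤ := by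
    rw [lintegral_tsum fun i => (hH i).aemeasurable.ennreal_ofReal]
    simp_rw [← ofReal_integral_eq_lintegral_ofReal (hH _) (ae_of_all _ (h0 _))]
    exact hs.tsum_ofReal_ne_top
  have hint := integrable_toReal_of_lintegral_ne_top
    (AEMeasurable.tsum fun i => (hH i).aemeasurable.ennreal_ofReal) hfin
  refine hint.congr (ae_of_all _ fun p => ?_)
  simp only
  rw [ENNReal.tsum_toReal_eq fun i => ENNReal.ofReal_ne_top]
  exact tsum_congr fun i => ENNReal.toReal_ofReal (h0 i p)

theorem integral_sq_norm_eq {X : Type*} [MeasurableSpace X] {μ : Measure X} (f : Lp ℂ 2 μ) :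
    ∫ x, ‖f x‖ ^ 2 ∂μ = ‖f‖ ^ 2 := by
  have h : ((‖f‖ ^ 2 : ℝ) : ℂ) = ((∫ x, ‖f x‖ ^ 2 ∂μ : ℝ) : ℂ) := by
    have h1 := L2.inner_def (𝕜 := ℂ) f f
    rw [inner_self_eq_norm_sq_to_K] at h1
    simp_rw [inner_self_eq_norm_sq_to_K] at h1
    rw [← integral_complex_ofReal]
    simpa using h1
  exact_mod_cast h.symm

/-- If the image of `τ` under `φ` is at most `c • μ`, then composition with `φ` maps `L²(μ)` to
`L²(τ)` with squared norm at most `c`. -/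
theorem integral_sq_norm_comp_le {X Z : Type*} [MeasurableSpace X] [MeasurableSpace Z]
    {μ : Measure X} {τ : Measure Z} {φ : Z → X} (hφ : Measurable φ) {c : ℝ} (hc : 0 < c)
    (hle : τ.map φ ≤ ENNReal.ofReal c • μ) (f : Lp ℂ 2 μ) :
    AEStronglyMeasurable (fun z => f (φ z)) τ ∧ Integrable (fun z => ‖f (φ z)‖ ^ 2) τ ∧
      ∫ z, ‖f (φ z)‖ ^ 2 ∂τ ≤ c * ‖f‖ ^ 2 := by
  have hfm : StronglyMeasurable f := Lp.stronglyMeasurable f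
  have hsq : Integrable (fun x => ‖f x‖ ^ 2) μ :=
    (memLp_two_iff_integrable_sq_norm hfm.aestronglyMeasurable).1 (Lp.memLp f)
  have hsqc : Integrable (fun x => ‖f x‖ ^ 2) (ENNReal.ofReal c • μ) :=
    hsq.smul_measure ENNReal.ofReal_ne_top
  have hsqm := hsqc.mono_measure hle
  refine ⟨(hfm.comp_measurable hφ).aestronglyMeasurable, hsqm.comp_measurable hφ, ?_⟩
  calc ∫ z, ‖f (φ z)‖ ^ 2 ∂τ = ∫ x, ‖f x‖ ^ 2 ∂(τ.map φ) :=
        (integral_map hφ.aemeasurable hsqm.aestronglyMeasurable).symm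
    _ ≤ ∫ x, ‖f x‖ ^ 2 ∂(ENNReal.ofReal c • μ) :=
        integral_mono_measure hle (ae_of_all _ fun x => by positivity) hsqc
    _ = c * ‖f‖ ^ 2 := by
        rw [integral_smul_measure, integral_sq_norm_eq, ENNReal.toReal_ofReal hc.le, smul_eq_mul]

/-- With `σ` an Arveson measure on `Y × X` (encoded by its total
variation `τ` and a unimodular polar density `w`, so that `σ(E) = ∫_E w dτ`) and `T_σ`
the associated pseudo-integral operator, for sequences `(f_i) ⊆ L²(X,μ)`,
`(g_i) ⊆ L²(Y,ν)` with `∑ ‖f_i‖₂² < ∞`, `∑ ‖g_i‖₂² < ∞`, the function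
`(y,x) ↦ ∑_i |f_i(x)||g_i(y)|` is `|σ|`-integrable and
`∑_i ∫ (T_σ f_i) g_i dν = ∫ (∑_i f_i(x) g_i(y)) dσ(y,x)`, the series converging
absolutely. -/
theorem stmt_1
    {X Y : Type*} [MeasurableSpace X] [StandardBorelSpace X]
    [MeasurableSpace Y] [StandardBorelSpace Y]
    (μ : Measure X) (ν : Measure Y) [SigmaFinite μ] [SigmaFinite ν]
    (τ : Measure (Y × X)) [IsFiniteMeasure τ]
    (w : Y × X → ℂ) (hw_meas : Measurable w)
    (hw_unimodular : ∀ᵐ p ∂τ, ‖w p‖ = 1)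
    (c : ℝ) (hc : 0 < c)
    (hmargX : ∀ α : Set X, MeasurableSet α → τ (Set.univ ×ˢ α) ≤ ENNReal.ofReal c * μ α)
    (hmargY : ∀ β : Set Y, MeasurableSet β → τ (β ×ˢ Set.univ) ≤ ENNReal.ofReal c * ν β)
    (T : Lp ℂ 2 μ →L[ℂ] Lp ℂ 2 ν)
    (hT : ∀ (f : Lp ℂ 2 μ) (g : Lp ℂ 2 ν),
        ∫ y, T f y * (starRingEnd ℂ) (g y) ∂ν
          = ∫ p, f p.2 * (starRingEnd ℂ) (g p.1) * w p ∂τ)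
    (f : ℕ → Lp ℂ 2 μ) (g : ℕ → Lp ℂ 2 ν)
    (hf : Summable fun i => ‖f i‖ ^ 2) (hg : Summable fun i => ‖g i‖ ^ 2) :
    Integrable (fun p : Y × X => ∑' i, ‖f i p.2‖ * ‖g i p.1‖) τ ∧
    Summable (fun i => ‖∫ y, T (f i) y * g i y ∂ν‖) ∧
    ∑' i, ∫ y, T (f i) y * g i y ∂ν
      = ∫ p, (∑' i, f i p.2 * g i p.1) * w p ∂τ := by
  have hX : τ.map Prod.snd ≤ ENNReal.ofReal c • μ := by
    refine Measure.le_iff.2 fun α hα => ?_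
    rw [Measure.map_apply measurable_snd hα, ← Set.univ_prod]
    exact hmargX α hα
  have hY : τ.map Prod.fst ≤ ENNReal.ofReal c • ν := by
    refine Measure.le_iff.2 fun β hβ => ?_
    rw [Measure.map_apply measurable_fst hβ, ← Set.prod_univ]
    exact hmargY β hβ
  have hF := fun i => integral_sq_norm_comp_le measurable_snd hc hX (f i)
  have hG := fun i => integral_sq_norm_comp_le measurable_fst hc hY (g i)
  have hamgm : ∀ i (p : Y × X),
      ‖f i p.2‖ * ‖g i p.1‖ ≤ (‖f i p.2‖ ^ 2 + ‖g i p.1‖ ^ 2) / 2 := fun i p => by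
    linarith [two_mul_le_add_sq ‖f i p.2‖ ‖g i p.1‖]
  have hbd : ∀ i, Integrable (fun p : Y × X => (‖f i p.2‖ ^ 2 + ‖g i p.1‖ ^ 2) / 2) τ :=
    fun i => ((hF i).2.1.add (hG i).2.1).div_const 2
  have hH : ∀ i, Integrable (fun p : Y × X => ‖f i p.2‖ * ‖g i p.1‖) τ := fun i => by
    refine (hbd i).mono' ((hF i).1.norm.mul (hG i).1.norm) (ae_of_all _ fun p => ?_)
    rw [Real.norm_of_nonneg (by positivity)]
    exact hamgm i p
  have hsum : Summable fun i => ∫ p : Y × X, ‖f i p.2‖ * ‖g i p.1‖ ∂τ := by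
    refine Summable.of_nonneg_of_le (fun i => integral_nonneg fun p => by positivity) (fun i => ?_)
      ((hf.add hg).mul_left (c / 2))
    have h1 := integral_mono (hH i) (hbd i) (hamgm i)
    rw [integral_div, integral_add (hF i).2.1 (hG i).2.1] at h1
    linarith [(hF i).2.2, (hG i).2.2]
  -- The pairing hypothesis on `T` is applied to the conjugate of `g i`.
  have hterm : ∀ i, ∫ y, T (f i) y * g i y ∂ν = ∫ p, f i p.2 * g i p.1 * w p ∂τ := fun i => by
    have hstar : ∀ᵐ y ∂ν, (starRingEnd ℂ) ((star (g i) : Lp ℂ 2 ν) y) = g i y := by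
      filter_upwards [Lp.coeFn_star (g i)] with y hy
      simp [hy]
    have hstar' : ∀ᵐ p ∂τ, (starRingEnd ℂ) ((star (g i) : Lp ℂ 2 ν) p.1) = g i p.1 :=
      ae_of_ae_map measurable_fst.aemeasurable
        ((hY.absolutelyContinuous.trans Measure.smul_absolutelyContinuous).ae_le hstar)
    calc ∫ y, T (f i) y * g i y ∂ν
        = ∫ y, T (f i) y * (starRingEnd ℂ) ((star (g i) : Lp ℂ 2 ν) y) ∂ν :=
          integral_congr_ae (hstar.mono fun y hy => by simp only [hy])
      _ = _ := hT _ _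
      _ = _ := integral_congr_ae (hstar'.mono fun p hp => by simp only [hp])
  have hnorm : ∀ i, (fun p : Y × X => ‖f i p.2 * g i p.1 * w p‖) =ᵐ[τ]
      fun p => ‖f i p.2‖ * ‖g i p.1‖ := fun i => by
    filter_upwards [hw_unimodular] with p hp
    rw [norm_mul, norm_mul, hp, mul_one]
  have hK : ∀ i, Integrable (fun p : Y × X => f i p.2 * g i p.1 * w p) τ := fun i =>
    (integrable_norm_iff (((hF i).1.mul (hG i).1).mul hw_meas.aestronglyMeasurable)).1
      ((hH i).congr (hnorm i).symm)
  have hKsum : Summable fun i => ∫ p : Y × X, ‖f i p.2 * g i p.1 * w p‖ ∂τ := by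
    simpa only [integral_congr_ae (hnorm _)] using hsum
  refine ⟨integrable_tsum_of_nonneg hH (fun i p => by positivity) hsum, ?_, ?_⟩
  · simp_rw [hterm]
    exact hKsum.of_nonneg_of_le (fun i => norm_nonneg _) fun i => norm_integral_le_integral_norm _
  · simp_rw [hterm, ← tsum_mul_right]
    exact integral_tsum_of_summable_integral_norm hK hKsum
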